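/- Consider a two-player zero-sum normal-form game with n × m payoff (loss) matrix A, where player 1 plays x ∈ Δ^n to minimize xᵀAy and player 2 plays y ∈ Δ^m to maximize it. Let w¹, …, wᵀ > 0 and τ¹, …, τᵀ > 0 be such that t ↦ τ^t/w^t is non-increasing, and let v_x¹, …, v_xᵀ ∈ ℝ^n and v_y¹, …, v_yᵀ ∈ ℝ^m be prediction vectors. Suppose both players run PWCFR+ simultaneously: R_x⁰ = 0, R_y⁰ = 0, and for 1 ≤ t ≤ T: R̃_x^t = [R_x^{t−1} + w^t v_x^t]⁺, R̃_y^t = [R_y^{t−1} + w^t v_y^t]⁺; x^t = N(R̃_x^t), y^t = N(R̃_y^t); ℓ_x^t = A y^t, ℓ_y^t = −Aᵀ x^t; r_x^t = ⟨ℓ_x^t, x^t⟩·𝟏 − ℓ_x^t, r_y^t = ⟨ℓ_y^t, y^t⟩·𝟏 − ℓ_y^t; R_x^t = [R_x^{t−1} + w^t r_x^t]⁺, R_y^t = [R_y^{t−1} + w^t r_y^t]⁺. Let x̄ = (Σ_t τ^t x^t)/(Σ_t τ^t) and ȳ = (Σ_t τ^t y^t)/(Σ_t τ^t). Then (x̄,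 ȳ) is an ε-Nash equilibrium with ε = ( √(2(τ¹/w¹) Σ_t τ^t w^t ‖r_x^t − v_x^t‖₂²) + √(2(τ¹/w¹) Σ_t τ^t w^t ‖r_y^t − v_y^t‖₂²) ) / (Σ_t τ^t), i.e. x̄ᵀAȳ − min_{x′∈Δ^n} x′ᵀAȳ ≤ ε and max_{y′∈Δ^m} x̄ᵀAy′ − x̄ᵀAȳ ≤ ε. -/

import Mathlib

open Finset Matrix
open scoped Classical

/-- Euclidean dot product on `Fin n → ℝ`. -/
def dotp {n : ℕ} (a b : Fin n → ℝ) : ℝ := ∑ i, a i * b i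

/-- Componentwise positive part. -/
def clipPos {n : ℕ} (v : Fin n → ℝ) : Fin n → ℝ := fun i => max (v i) 0

/-- Normalization `N(v) = v / ‖v‖₁`, with `N(0)` the uniform distribution. -/
noncomputable def nmz {n : ℕ} (v : Fin n → ℝ) : Fin n → ℝ :=
  if v = 0 then (fun _ => (1 : ℝ) / n) else fun i => v i / ∑ j, |v j|

lemma coord_ineq (z w r v u : ℝ) (hu : 0 ≤ u) :
    w * r * (u - max (z + w * v) 0) ≤
      1/2 * ((u - z)^2 - (u - max (z + w * r) 0)^2) + 1/2 * (w^2 * (r - v)^2) := by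
  have h1 : (z + w * r - max (z + w * r) 0) * (u - max (z + w * r) 0) ≤ 0 := by
    rcases le_total (z + w * r) 0 with h | h
    · rw [max_eq_right h]; nlinarith
    · rw [max_eq_left h]; simp
  have h2 : (z + w * v - max (z + w * v) 0) * (max (z + w * r) 0 - max (z + w * v) 0) ≤ 0 := by
    have h0 : 0 ≤ max (z + w * r) 0 := le_max_right _ _
    rcases le_total (z + w * v) 0 with h | h
    · rw [max_eq_right h]; nlinarith
    · rw [max_eq_left h]; simp
  generalize max (z + w * r) 0 = p at *
  generalize max (z + w * v) 0 = q at *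
  nlinarith [sq_nonneg (w * (r - v) - (p - q)), sq_nonneg (q - z)]

lemma nmz_clip_mem {n : ℕ} (hn : 0 < n) (u : Fin n → ℝ) :
    nmz (clipPos u) ∈ stdSimplex ℝ (Fin n) := by
  have hpos : ∀ i, 0 ≤ clipPos u i := fun i => le_max_right _ _
  unfold nmz
  split_ifs with h
  · refine ⟨fun i => by positivity, ?_⟩
    have : (n : ℝ) ≠ 0 := by positivity
    simp [this]
  · have hs : 0 < ∑ j, |clipPos u j| := by
      obtain ⟨i, hi⟩ := Function.ne_iff.mp h
      exact Finset.sum_pos' (fun _ _ => abs_nonneg _) ⟨i, mem_univ _, abs_pos.mpr hi⟩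
    refine ⟨fun i => div_nonneg (hpos i) hs.le, ?_⟩
    rw [← Finset.sum_div, div_eq_one_iff_eq hs.ne']
    exact Finset.sum_congr rfl fun i _ => (abs_of_nonneg (hpos i)).symm

lemma nmz_scale {n : ℕ} (u : Fin n → ℝ) (i : Fin n) : u i = (∑ j, |u j|) * nmz u i := by
  unfold nmz
  split_ifs with h
  · simp [h]
  · have hs : 0 < ∑ j, |u j| := by
      obtain ⟨i, hi⟩ := Function.ne_iff.mp h
      exact Finset.sum_pos' (fun _ _ => abs_nonneg _) ⟨i, mem_univ _, abs_pos.mpr hi⟩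
    field_simp

lemma player_regret (n T : ℕ) (hn : 0 < n) (hT : 1 ≤ T) (w τ : ℕ → ℝ)
    (hw : ∀ t ∈ Icc 1 T, 0 < w t) (hτ : ∀ t ∈ Icc 1 T, 0 < τ t)
    (hmono : ∀ t, 1 ≤ t → t < T → τ (t + 1) / w (t + 1) ≤ τ t / w t)
    (vx Rx Rtx x rx ℓx : ℕ → Fin n → ℝ)
    (hRx0 : Rx 0 = 0)
    (hRtx : ∀ t ∈ Icc 1 T, Rtx t = clipPos (fun i => Rx (t - 1) i + w t * vx t i))
    (hx : ∀ t ∈ Icc 1 T, x t = nmz (Rtx t))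
    (hrx : ∀ t ∈ Icc 1 T, rx t = fun i => dotp (ℓx t) (x t) - ℓx t i)
    (hRx : ∀ t ∈ Icc 1 T, Rx t = clipPos (fun i => Rx (t - 1) i + w t * rx t i))
    (x' : Fin n → ℝ) (hx' : x' ∈ stdSimplex ℝ (Fin n)) :
    ∑ t ∈ Icc 1 T, τ t * (dotp (ℓx t) (x t) - dotp (ℓx t) x') ≤
      Real.sqrt (2 * (τ 1 / w 1)
          * ∑ t ∈ Icc 1 T, τ t * w t * ∑ i, (rx t i - vx t i) ^ 2) := by
  have hxm : ∀ t ∈ Icc 1 T, x t ∈ stdSimplex ℝ (Fin n) := by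
    intro t ht; rw [hx t ht, hRtx t ht]; exact nmz_clip_mem hn _
  have horth : ∀ t ∈ Icc 1 T, ∑ i, rx t i * Rtx t i = 0 := by
    intro t ht
    have h1 : ∀ i, Rtx t i = (∑ j, |Rtx t j|) * x t i := by
      intro i; rw [hx t ht]; exact nmz_scale _ i
    have h2 : ∑ i, rx t i * x t i = 0 := by
      rw [hrx t ht]
      simp only [sub_mul, Finset.sum_sub_distrib, ← Finset.mul_sum, (hxm t ht).2]
      simp [dotp]
    calc _ = ∑ i, (∑ j, |Rtx t j|) * (rx t i * x t i) :=
          Finset.sum_congr rfl fun i _ => by linear_combination rx t i * h1 i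
      _ = 0 := by rw [← Finset.mul_sum, h2, mul_zero]
  -- one step
  have hstep : ∀ u : Fin n → ℝ, (∀ i, 0 ≤ u i) → ∀ t ∈ Icc 1 T,
      τ t * ∑ i, rx t i * u i ≤ 1/2 * (τ t / w t) *
        (∑ i, (u i - Rx (t-1) i)^2 - ∑ i, (u i - Rx t i)^2)
        + 1/2 * (τ t * w t * ∑ i, (rx t i - vx t i)^2) := by
    intro u hu t ht
    have hs : ∑ i, w t * rx t i * (u i - Rtx t i) ≤
        ∑ i, (1/2 * ((u i - Rx (t-1) i)^2 - (u i - Rx t i)^2)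
          + 1/2 * ((w t)^2 * (rx t i - vx t i)^2)) := by
      refine Finset.sum_le_sum fun i _ => ?_
      have := coord_ineq (Rx (t-1) i) (w t) (rx t i) (vx t i) (u i) (hu i)
      rw [hRtx t ht, hRx t ht]
      exact this
    have hl : ∑ i, w t * rx t i * (u i - Rtx t i) = w t * ∑ i, rx t i * u i := by
      have := horth t ht
      calc _ = w t * ∑ i, rx t i * u i - w t * ∑ i, rx t i * Rtx t i := by
            rw [Finset.mul_sum, Finset.mul_sum, ← Finset.sum_sub_distrib]
            exact Finset.sum_congr rfl fun i _ => by ring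
        _ = _ := by rw [this]; ring
    rw [hl, Finset.sum_add_distrib, ← Finset.mul_sum, ← Finset.mul_sum, ← Finset.mul_sum,
      Finset.sum_sub_distrib] at hs
    have hwt := hw t ht
    have := mul_le_mul_of_nonneg_left hs (div_pos (hτ t ht) hwt).le
    have e1 : τ t / w t * (w t * ∑ i, rx t i * u i) = τ t * ∑ i, rx t i * u i := by
      field_simp
    have e2 : τ t / w t * (w t)^2 = τ t * w t := by field_simp
    rw [e1] at this
    refine this.trans (le_of_eq ?_)
    rw [← e2]; ring
  have hsum : ∀ u : Fin n → ℝ, (∀ i, 0 ≤ u i) → ∀ k, 1 ≤ k → k ≤ T →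
      ∑ t ∈ Icc 1 k, τ t * ∑ i, rx t i * u i ≤ 1/2 * (τ 1 / w 1) * ∑ i, (u i)^2
        - 1/2 * (τ k / w k) * ∑ i, (u i - Rx k i)^2
        + 1/2 * ∑ t ∈ Icc 1 k, τ t * w t * ∑ i, (rx t i - vx t i)^2 := by
    intro u hu k hk
    induction k, hk using Nat.le_induction with
    | base =>
      intro h
      have := hstep u hu 1 (by simp [hT])
      simp [hRx0] at this ⊢
      linarith
    | succ k hk ih =>
      intro h
      have h1 := ih (by omega)
      have h2 := hstep u hu (k+1) (by simp; omega)
      have h3 := hmono k hk (by omega)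
      rw [Finset.sum_Icc_succ_top (by omega), Finset.sum_Icc_succ_top (by omega)]
      simp only [Nat.add_sub_cancel] at h2
      have h4 : 0 ≤ ∑ i, (u i - Rx k i)^2 := Finset.sum_nonneg fun i _ => sq_nonneg _
      have h5 := mul_le_mul_of_nonneg_right h3 h4
      linarith
  have h1T : (1:ℕ) ∈ Icc 1 T := by simp [hT]
  have hTT : T ∈ Icc 1 T := by simp [hT]
  have ha : 0 < τ 1 / w 1 := div_pos (hτ 1 h1T) (hw 1 h1T)
  have haT : 0 < τ T / w T := div_pos (hτ T hTT) (hw T hTT)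
  have hG : ∑ t ∈ Icc 1 T, τ t * (dotp (ℓx t) (x t) - dotp (ℓx t) x') =
      ∑ t ∈ Icc 1 T, τ t * ∑ i, rx t i * x' i := by
    refine Finset.sum_congr rfl fun t ht => ?_
    rw [hrx t ht]
    simp only [sub_mul, Finset.sum_sub_distrib, ← Finset.mul_sum, hx'.2]
    simp [dotp]
  rw [hG]
  have hK : 0 ≤ ∑ t ∈ Icc 1 T, τ t * w t * ∑ i, (rx t i - vx t i) ^ 2 :=
    Finset.sum_nonneg fun t ht => mul_nonneg (mul_nonneg (hτ t ht).le (hw t ht).le)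
      (Finset.sum_nonneg fun i _ => sq_nonneg _)
  have hn1 : ∑ i, (x' i)^2 ≤ 1 := by
    rw [← hx'.2]
    refine Finset.sum_le_sum fun i _ => ?_
    have h1 : x' i ≤ 1 := by
      rw [← hx'.2]; exact Finset.single_le_sum (fun j _ => hx'.1 j) (mem_univ i)
    nlinarith [hx'.1 i]
  have hlam : ∀ l : ℝ, 0 ≤ l → l * ∑ t ∈ Icc 1 T, τ t * ∑ i, rx t i * x' i ≤
      1/2 * (τ 1 / w 1) * l^2 +
        1/2 * ∑ t ∈ Icc 1 T, τ t * w t * ∑ i, (rx t i - vx t i) ^ 2 := by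
    intro l hl
    have h := hsum (fun i => l * x' i) (fun i => mul_nonneg hl (hx'.1 i)) T hT le_rfl
    have e1 : ∑ t ∈ Icc 1 T, τ t * ∑ i, rx t i * (l * x' i) =
        l * ∑ t ∈ Icc 1 T, τ t * ∑ i, rx t i * x' i := by
      simp only [Finset.mul_sum]
      exact Finset.sum_congr rfl fun t _ => Finset.sum_congr rfl fun i _ => by ring
    have e2 : ∑ i, (l * x' i)^2 = l^2 * ∑ i, (x' i)^2 := by
      simp only [Finset.mul_sum, mul_pow]
    rw [e1, e2] at h
    have h4 : 0 ≤ (τ T / w T) * ∑ i, (l * x' i - Rx T i)^2 :=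
      mul_nonneg haT.le (Finset.sum_nonneg fun i _ => sq_nonneg _)
    have h5 : (τ 1 / w 1) * (l^2 * ∑ i, (x' i)^2) ≤ (τ 1 / w 1) * (l^2 * 1) := by
      gcongr
    linarith
  generalize ∑ t ∈ Icc 1 T, τ t * ∑ i, rx t i * x' i = G at *
  generalize ∑ t ∈ Icc 1 T, τ t * w t * ∑ i, (rx t i - vx t i) ^ 2 = K at *
  generalize τ 1 / w 1 = a at *
  rcases le_total G 0 with h | h
  · exact h.trans (Real.sqrt_nonneg _)
  · apply Real.le_sqrt_of_sq_le
    have h6 := mul_le_mul_of_nonneg_left (hlam (G / a) (by positivity)) ha.le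
    have e1 : a * (G / a * G) = G^2 := by field_simp
    have e2 : a * (1/2 * a * (G/a)^2 + 1/2 * K) = 1/2 * G^2 + 1/2 * (a * K) := by field_simp
    rw [e1, e2] at h6
    nlinarith [mul_nonneg ha.le hK]

lemma avg_mem {n : ℕ} (T : ℕ) (τ : ℕ → ℝ) (hτ : ∀ t ∈ Icc 1 T, 0 < τ t)
    (hS : 0 < ∑ t ∈ Icc 1 T, τ t) (x : ℕ → Fin n → ℝ)
    (hx : ∀ t ∈ Icc 1 T, x t ∈ stdSimplex ℝ (Fin n)) :
    (∑ t ∈ Icc 1 T, τ t)⁻¹ • ∑ t ∈ Icc 1 T, τ t • x t ∈ stdSimplex ℝ (Fin n) := by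
  rw [Finset.smul_sum]
  simp only [smul_smul]
  refine (convex_stdSimplex ℝ (Fin n)).sum_mem ?_ ?_ hx
  · intro t ht; have := hτ t ht; positivity
  · rw [← Finset.mul_sum, inv_mul_cancel₀ hS.ne']

lemma dotp_eq {n : ℕ} (a b : Fin n → ℝ) : dotp a b = a ⬝ᵥ b := rfl

/-- Theorem 4 of the paper instantiated on a two-player zero-sum normal-form game with
loss matrix `A`: if both players run PWCFR+ with weights `w` for regrets, `τ` for
average strategies (`τᵗ/wᵗ` non-increasing) and prediction vectors `vx`, `vy`, the
`τ`-weighted average strategy profile `(x̄, ȳ)` is an `ε`-Nash equilibrium with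
`ε = (√(2(τ¹/w¹)Σ τᵗwᵗ‖r_xᵗ − v_xᵗ‖₂²) + √(2(τ¹/w¹)Σ τᵗwᵗ‖r_yᵗ − v_yᵗ‖₂²))/(Σ τᵗ)`. -/
theorem stmt14 (n m T : ℕ) (hn : 0 < n) (hm : 0 < m) (hT : 1 ≤ T)
    (A : Matrix (Fin n) (Fin m) ℝ)
    (w τ : ℕ → ℝ)
    (hw : ∀ t ∈ Icc 1 T, 0 < w t) (hτ : ∀ t ∈ Icc 1 T, 0 < τ t)
    (hmono : ∀ t, 1 ≤ t → t < T → τ (t + 1) / w (t + 1) ≤ τ t / w t)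
    (vx : ℕ → Fin n → ℝ) (vy : ℕ → Fin m → ℝ)
    (Rx Rtx : ℕ → Fin n → ℝ) (Ry Rty : ℕ → Fin m → ℝ)
    (x rx : ℕ → Fin n → ℝ) (y ry : ℕ → Fin m → ℝ)
    (ℓx : ℕ → Fin n → ℝ) (ℓy : ℕ → Fin m → ℝ)
    (hRx0 : Rx 0 = 0) (hRy0 : Ry 0 = 0)
    (hRtx : ∀ t ∈ Icc 1 T, Rtx t = clipPos (fun i => Rx (t - 1) i + w t * vx t i))
    (hRty : ∀ t ∈ Icc 1 T, Rty t = clipPos (fun j => Ry (t - 1) j + w t * vy t j))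
    (hx : ∀ t ∈ Icc 1 T, x t = nmz (Rtx t))
    (hy : ∀ t ∈ Icc 1 T, y t = nmz (Rty t))
    (hℓx : ∀ t ∈ Icc 1 T, ℓx t = A.mulVec (y t))
    (hℓy : ∀ t ∈ Icc 1 T, ℓy t = -(Aᵀ.mulVec (x t)))
    (hrx : ∀ t ∈ Icc 1 T, rx t = fun i => dotp (ℓx t) (x t) - ℓx t i)
    (hry : ∀ t ∈ Icc 1 T, ry t = fun j => dotp (ℓy t) (y t) - ℓy t j)
    (hRx : ∀ t ∈ Icc 1 T, Rx t = clipPos (fun i => Rx (t - 1) i + w t * rx t i))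
    (hRy : ∀ t ∈ Icc 1 T, Ry t = clipPos (fun j => Ry (t - 1) j + w t * ry t j)) :
    let S : ℝ := ∑ t ∈ Icc 1 T, τ t
    let xbar : Fin n → ℝ := S⁻¹ • ∑ t ∈ Icc 1 T, τ t • x t
    let ybar : Fin m → ℝ := S⁻¹ • ∑ t ∈ Icc 1 T, τ t • y t
    let ε : ℝ :=
      (Real.sqrt (2 * (τ 1 / w 1)
          * ∑ t ∈ Icc 1 T, τ t * w t * ∑ i, (rx t i - vx t i) ^ 2)
        + Real.sqrt (2 * (τ 1 / w 1)
          * ∑ t ∈ Icc 1 T, τ t * w t * ∑ j, (ry t j - vy t j) ^ 2)) / S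
    (∀ x' ∈ stdSimplex ℝ (Fin n),
      dotp xbar (A.mulVec ybar) - dotp x' (A.mulVec ybar) ≤ ε) ∧
    (∀ y' ∈ stdSimplex ℝ (Fin m),
      dotp xbar (A.mulVec y') - dotp xbar (A.mulVec ybar) ≤ ε) := by
  intro S xbar ybar ε
  have hS : 0 < S := Finset.sum_pos hτ ⟨1, by simp [hT]⟩
  have hxm : ∀ t ∈ Icc 1 T, x t ∈ stdSimplex ℝ (Fin n) := by
    intro t ht; rw [hx t ht, hRtx t ht]; exact nmz_clip_mem hn _
  have hym : ∀ t ∈ Icc 1 T, y t ∈ stdSimplex ℝ (Fin m) := by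
    intro t ht; rw [hy t ht, hRty t ht]; exact nmz_clip_mem hm _
  have hxb : xbar ∈ stdSimplex ℝ (Fin n) := avg_mem T τ hτ hS x hxm
  have hyb : ybar ∈ stdSimplex ℝ (Fin m) := avg_mem T τ hτ hS y hym
  have key : ∀ x' ∈ stdSimplex ℝ (Fin n), ∀ y' ∈ stdSimplex ℝ (Fin m),
      dotp xbar (A.mulVec y') - dotp x' (A.mulVec ybar) ≤ ε := by
    intro x' hx' y' hy'
    have h1 := player_regret n T hn hT w τ hw hτ hmono vx Rx Rtx x rx ℓx hRx0 hRtx hx hrx hRx x' hx'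
    have h2 := player_regret m T hm hT w τ hw hτ hmono vy Ry Rty y ry ℓy hRy0 hRty hy hry hRy y' hy'
    rw [le_div_iff₀ hS]
    refine le_trans (le_of_eq ?_) (add_le_add h1 h2)
    have e1 : dotp xbar (A.mulVec y') = S⁻¹ * ∑ t ∈ Icc 1 T, τ t * (x t ⬝ᵥ A.mulVec y') := by
      simp only [xbar, dotp_eq, smul_dotProduct, sum_dotProduct, smul_eq_mul]
    have e2 : dotp x' (A.mulVec ybar) = S⁻¹ * ∑ t ∈ Icc 1 T, τ t * (x' ⬝ᵥ A.mulVec (y t)) := by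
      simp only [ybar, dotp_eq, mulVec_smul, dotProduct_smul, smul_eq_mul, mulVec_sum,
        dotProduct_sum]
    rw [e1, e2, ← mul_sub, mul_comm, ← mul_assoc, mul_inv_cancel₀ hS.ne', one_mul,
      ← Finset.sum_sub_distrib, ← Finset.sum_add_distrib]
    refine Finset.sum_congr rfl fun t ht => ?_
    have c1 : ∀ q : Fin m → ℝ, dotp (ℓy t) q = -(x t ⬝ᵥ A.mulVec q) := by
      intro q
      rw [hℓy t ht, dotp_eq, neg_dotProduct, mulVec_transpose, dotProduct_mulVec]
    have c2 : ∀ q : Fin n → ℝ, dotp (ℓx t) q = q ⬝ᵥ A.mulVec (y t) := by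
      intro q
      rw [hℓx t ht, dotp_eq, dotProduct_comm]
    rw [c1, c1, c2, c2]
    ring
  exact ⟨fun x' hx' => key x' hx' ybar hyb, fun y' hy' => key xbar hxb y' hy'⟩
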